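/- arXiv:1811.04145 — 5 statements merged into one kernel-verified Lean document; each statement's English description precedes it below -/
import Mathlib

section
/- Let X be a compact metric space, ε > 0, and A ⊆ X a chain connected subset. Then any two points of A may be joined by an ε-chain lying in A having at most 2·C(X,ε/2) points. -/
open Filter Metric Set
open scoped ENNReal NNReal Topology

variable {X : Type*} [MetricSpace X]

/-- The metric entourage of size `ε`: pairs at distance less than `ε`. -/
def MetricEnt (X : Type*) [MetricSpace X] (ε : ℝ) : Set (X × X) :=
  {p | dist p.1 p.2 < ε}

/-- An entourage in a metric space: a symmetric subset of `X × X` containing some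
metric entourage `E_ε`. -/
def IsEntourage (E : Set (X × X)) : Prop :=
  (∀ p : X × X, p ∈ E → (p.2, p.1) ∈ E) ∧ ∃ ε > 0, MetricEnt X ε ⊆ E

/-- The `E`-ball about `x`: `B(x,E) = {y | (x,y) ∈ E}`. -/
def EBall (E : Set (X × X)) (x : X) : Set X := {y | (x, y) ∈ E}

/-- An `E`-chain: a nonempty finite sequence of points with all consecutive pairs in `E`. -/
def IsEChain (E : Set (X × X)) (l : List X) : Prop :=
  l ≠ [] ∧ l.Chain' (fun a b => (a, b) ∈ E)

/-- Concatenation of two chains sharing an endpoint (the last point of `α` should be the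
first point of `β`). -/
def chainConc (α β : List X) : List X := α ++ β.tail

/-- The length `L(α)` of a chain: the sum of the distances between consecutive points. -/
noncomputable def chainLength : List X → ℝ
  | [] => 0
  | [_] => 0
  | a :: b :: rest => dist a b + chainLength (b :: rest)

/-- A basic move of an `E`-homotopy: inserting a point between two consecutive points
(legal when both new pairs lie in `E`), or removing an interior point (legal when the
resulting consecutive pair lies in `E`).  Endpoints are never changed. -/
inductive EStep (E : Set (X × X)) : List X → List X → Prop
  | insert (pre : List X) (a x b : X) (post : List X)
      (h1 : (a, x) ∈ E) (h2 : (x, b) ∈ E) :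
      EStep E (pre ++ a :: b :: post) (pre ++ a :: x :: b :: post)
  | remove (pre : List X) (a x b : X) (post : List X)
      (h : (a, b) ∈ E) :
      EStep E (pre ++ a :: x :: b :: post) (pre ++ a :: b :: post)

/-- Two chains are `E`-homotopic if one passes from one to the other by finitely many
basic moves. -/
def EHomotopic (E : Set (X × X)) : List X → List X → Prop :=
  Relation.ReflTransGen (EStep E)

/-- Two `E`-loops `l₁`, `l₂` are freely `E`-homotopic if there are `E`-chains `α`, `β`
from a common point to their respective basepoints such that the corresponding
conjugated loops are `E`-homotopic. -/
def FreelyEHomotopic (E : Set (X × X)) (l₁ l₂ : List X) : Prop :=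
  ∃ α β : List X, IsEChain E α ∧ IsEChain E β ∧ α.head? = β.head? ∧
    α.getLast? = l₁.head? ∧ β.getLast? = l₂.head? ∧
    EHomotopic E (chainConc (chainConc α l₁) α.reverse)
      (chainConc (chainConc β l₂) β.reverse)

/-- A subset `A` is chain connected if for every `δ > 0` any two points of `A` are joined
by a `δ`-chain lying in `A`. -/
def ChainConnected (A : Set X) : Prop :=
  ∀ δ > 0, ∀ x ∈ A, ∀ y ∈ A, ∃ l : List X, IsEChain (MetricEnt X δ) l ∧
    (∀ z ∈ l, z ∈ A) ∧ l.head? = some x ∧ l.getLast? = some y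

/-- A chained entourage: an entourage contained in the closure of its interior, this
closure being compact if the space is not, such that any pair `(x,y) ∈ E` may be joined
by arbitrarily fine chains inside `B(x,E) ∩ B(y,E)`. -/
def IsChained (E : Set (X × X)) : Prop :=
  IsEntourage E ∧ E ⊆ closure (interior E) ∧
  (¬ CompactSpace X → IsCompact (closure (interior E))) ∧
  ∀ p ∈ E, ∀ δ > 0, ∃ l : List X, IsEChain (MetricEnt X δ) l ∧
    l.head? = some p.1 ∧ l.getLast? = some p.2 ∧
    ∀ z ∈ l, z ∈ EBall E p.1 ∩ EBall E p.2

/-- An `F`-refinement of a `D`-chain: between each pair of consecutive points `x`, `y` of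
the original chain insert an `F`-chain from `x` to `y` lying in `B(x,D) ∩ B(y,D)`. -/
inductive IsRefinement (D F : Set (X × X)) : List X → List X → Prop
  | single (x : X) : IsRefinement D F [x] [x]
  | cons (x y : X) (seg rest refRest : List X)
      (hseg : IsEChain F (x :: (seg ++ [y])))
      (hin : ∀ z ∈ x :: (seg ++ [y]), z ∈ EBall D x ∩ EBall D y)
      (hrest : IsRefinement D F (y :: rest) refRest) :
      IsRefinement D F (x :: y :: rest) (x :: (seg ++ refRest))

/-- An `E`-subdivision of a curve `c` (regarded on `[0,1]`): an `E`-chain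
`{c(t₀),…,c(tₙ)}` with `0 = t₀ ≤ ⋯ ≤ tₙ = 1` such that the restriction of `c` to each
`[tᵢ,tᵢ₊₁]` lies in `B(c(tᵢ),E) ∩ B(c(tᵢ₊₁),E)`. -/
def IsSubdivision (E : Set (X × X)) (c : ℝ → X) (l : List X) : Prop :=
  ∃ ts : List ℝ, ts.head? = some 0 ∧ ts.getLast? = some 1 ∧
    l = ts.map c ∧ IsEChain E l ∧
    ts.Chain' (fun a b => a ≤ b ∧ ∀ s, a ≤ s → s ≤ b →
      c s ∈ EBall E (c a) ∩ EBall E (c b))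

/-- `c` is a stringing of the chain `l` iff `c` is a curve on `[0,1]` of which `l` is an
`E`-subdivision. -/
def IsStringing (E : Set (X × X)) (l : List X) (c : ℝ → X) : Prop :=
  ContinuousOn c (Set.Icc 0 1) ∧ IsSubdivision E c l

/-- Two curves with the same endpoints are `E`-homotopic if they admit `E`-homotopic
`E`-subdivisions. -/
def CurveEHomotopic (E : Set (X × X)) (c₁ c₂ : ℝ → X) : Prop :=
  ∃ l₁ l₂ : List X, IsSubdivision E c₁ l₁ ∧ IsSubdivision E c₂ l₂ ∧ EHomotopic E l₁ l₂

/-- Two closed curves are freely `E`-homotopic if they admit freely `E`-homotopic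
`E`-subdivisions. -/
def CurveFreelyEHomotopic (E : Set (X × X)) (c₁ c₂ : ℝ → X) : Prop :=
  ∃ l₁ l₂ : List X, IsSubdivision E c₁ l₁ ∧ IsSubdivision E c₂ l₂ ∧ FreelyEHomotopic E l₁ l₂

/-- A `D`-small loop: a `D`-loop of the form `γ * τ * γ̄` where `τ` is a `D`-loop with
exactly three edges. -/
def IsSmallLoop (D : Set (X × X)) (l : List X) : Prop :=
  ∃ (γ : List X) (a b c : X), IsEChain D γ ∧ γ.getLast? = some a ∧
    (a, b) ∈ D ∧ (b, c) ∈ D ∧ (c, a) ∈ D ∧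
    l = chainConc (chainConc γ [a, b, c, a]) γ.reverse

/-- `C(X,ε)`: the minimal number of open `ε`-balls needed to cover `X`. -/
noncomputable def coveringNumber (X : Type*) [MetricSpace X] (ε : ℝ) : ℕ :=
  sInf {n : ℕ | ∃ s : Finset X, s.card = n ∧ (⋃ x ∈ s, Metric.ball x ε) = Set.univ}

/-- A geodesic space: any two points are joined by a curve whose length (total
variation) equals the distance between them. -/
def IsGeodesicSpace (X : Type*) [MetricSpace X] : Prop :=
  ∀ x y : X, ∃ f : ℝ → X, ContinuousOn f (Set.Icc 0 1) ∧ f 0 = x ∧ f 1 = y ∧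
    eVariationOn f (Set.Icc 0 1) = ENNReal.ofReal (dist x y)

/-- Fixed-endpoint path homotopy of two curves on `[0,1]`. -/
def PathHomotopicOn (f g : ℝ → X) : Prop :=
  ∃ H : ℝ × ℝ → X, ContinuousOn H (Set.Icc 0 1 ×ˢ Set.Icc 0 1) ∧
    (∀ t ∈ Set.Icc (0:ℝ) 1, H (0, t) = f t ∧ H (1, t) = g t) ∧
    (∀ s ∈ Set.Icc (0:ℝ) 1, H (s, 0) = f 0 ∧ H (s, 1) = f 1)

/-- Concatenation of a list of chains (each sharing its endpoint with the next). -/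
def concList : List (List X) → List X
  | [] => []
  | [l] => l
  | l :: l' :: ls => chainConc l (concList (l' :: ls))

/-- Concatenation of two curves on `[0,1]`. -/
noncomputable def concat2 (f g : ℝ → X) : ℝ → X :=
  fun t => if t ≤ 1 / 2 then f (2 * t) else g (2 * t - 1)

/-- Concatenation of a finite list of loops based at `p`. -/
noncomputable def concatLoops (p : X) : List (ℝ → X) → ℝ → X
  | [] => fun _ => p
  | [f] => f
  | f :: g :: fs => concat2 f (concatLoops p (g :: fs))

/-- A curve on `[0,1]` is parameterized proportional to arclength. -/
def PropToArclength (c : ℝ → X) : Prop :=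
  ∀ t ∈ Set.Icc (0:ℝ) 1, eVariationOn c (Set.Icc 0 t) =
    ENNReal.ofReal t * eVariationOn c (Set.Icc 0 1)

/-- A closed curve (parameterized on `[0,1]` proportional to arclength) is a closed
`κ`-geodesic if every subarc of its periodic extension of length at most `κ` has length
equal to the distance between its endpoints. -/
def IsClosedKGeodesic (c : ℝ → X) (κ : ℝ) : Prop :=
  c 0 = c 1 ∧
  ∀ s t : ℝ, s ≤ t →
    eVariationOn (fun u => c (Int.fract u)) (Set.Icc s t) ≤ ENNReal.ofReal κ →
    eVariationOn (fun u => c (Int.fract u)) (Set.Icc s t) =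
      ENNReal.ofReal (dist (c (Int.fract s)) (c (Int.fract t)))
/-- in a compact metric space, any two points of a chain connected set `A`
may be joined by an `ε`-chain in `A` with at most `2·C(X,ε/2)` points. -/
theorem chainConnected_short_chain [CompactSpace X] (ε : ℝ) (hε : 0 < ε)
    (A : Set X) (hA : ChainConnected A) (x y : X) (hx : x ∈ A) (hy : y ∈ A) :
    ∃ l : List X, IsEChain (MetricEnt X ε) l ∧ (∀ z ∈ l, z ∈ A) ∧
      l.head? = some x ∧ l.getLast? = some y ∧
      l.length ≤ 2 * coveringNumber X (ε / 2) := by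
  classical
  have hex : ∃ n : ℕ, ∃ l : List X, l.length = n ∧ IsEChain (MetricEnt X ε) l ∧
      (∀ z ∈ l, z ∈ A) ∧ l.head? = some x ∧ l.getLast? = some y := by
    obtain ⟨l, h⟩ := hA ε hε x hx y hy
    exact ⟨_, l, rfl, h⟩
  obtain ⟨l, hlen, ⟨hne, hch⟩, hlA, hhd, hlast⟩ := Nat.find_spec hex
  have hmin : ∀ l' : List X, IsEChain (MetricEnt X ε) l' → (∀ z ∈ l', z ∈ A) →
      l'.head? = some x → l'.getLast? = some y → l.length ≤ l'.length := by
    intro l' h1 h2 h3 h4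
    rw [hlen]
    exact Nat.find_min' hex ⟨l', rfl, h1, h2, h3, h4⟩
  refine ⟨l, ⟨hne, hch⟩, hlA, hhd, hlast, ?_⟩
  have hcov : {n : ℕ | ∃ s : Finset X, s.card = n ∧
      (⋃ x ∈ s, Metric.ball x (ε / 2)) = Set.univ}.Nonempty := by
    obtain ⟨t, -, htf, ht⟩ := Metric.totallyBounded_iff.1
      (isCompact_univ (X := X)).totallyBounded (ε / 2) (by positivity) |> fun
        ⟨t, htf, ht⟩ => (⟨t, trivial, htf, ht⟩ : ∃ t : Set X, True ∧ t.Finite ∧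
          Set.univ ⊆ ⋃ y ∈ t, Metric.ball y (ε / 2))
    refine ⟨_, htf.toFinset, rfl, ?_⟩
    apply Set.eq_univ_of_univ_subset
    simpa using ht
  obtain ⟨s, hs, hsU⟩ := Nat.sInf_mem hcov
  change s.card = coveringNumber X (ε / 2) at hs
  rw [← hs]
  have hc : ∀ z : X, ∃ c ∈ s, dist z c < ε / 2 := by
    intro z
    have : z ∈ (⋃ x ∈ s, Metric.ball x (ε / 2)) := by rw [hsU]; trivial
    simpa using this
  choose c hcs hcd using hc
  have key : ∀ i k : ℕ, ∀ hi : i < l.length, ∀ hk : k < l.length, i + 2 ≤ k →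
      ¬ dist l[i] l[k] < ε := by
    intro i k hi hk hik hd
    have := hmin (l.take (i+1) ++ l.drop k) ⟨?_, ?_⟩ ?_ ?_ ?_
    · simp at this
      omega
    · simp [hne]
    · refine List.isChain_append.2 ⟨hch.take _, hch.drop _, ?_⟩
      intro a ha b hb
      rw [List.getLast?_take] at ha
      rw [List.head?_drop] at hb
      simp [hi, hk] at ha hb
      subst ha; subst hb
      exact hd
    · intro z hz
      rcases List.mem_append.1 hz with h | h
      · exact hlA z (List.mem_of_mem_take h)
      · exact hlA z (List.mem_of_mem_drop h)
    · rw [List.head?_append, List.head?_take]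
      simp [hhd]
    · rw [List.getLast?_append, List.getLast?_drop]
      simp [hlast, hk]
  have := Finset.card_le_mul_card_image_of_maps_to (s := (Finset.univ : Finset (Fin l.length)))
    (t := s) (f := fun i => c l[i]) (fun i _ => hcs _) 2 ?_
  · simpa using this
  intro b _
  set F := Finset.univ.filter (fun i : Fin l.length => c l[i] = b) with hF
  rcases F.eq_empty_or_nonempty with h0 | h0
  · rw [h0]; simp
  have hm := F.min'_mem h0
  set m := F.min' h0 with hmdef
  have hsub : F.image (fun i : Fin l.length => (i : ℕ)) ⊆ {(m : ℕ), (m : ℕ) + 1} := by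
    intro k hk
    obtain ⟨k, hkF, rfl⟩ := Finset.mem_image.1 hk
    have hle : (m : ℕ) ≤ k := F.min'_le k hkF
    have hb1 : c l[m] = b := (Finset.mem_filter.1 hm).2
    have hb2 : c l[k] = b := (Finset.mem_filter.1 hkF).2
    have hlt : ¬ ((m : ℕ) + 2 ≤ k) := by
      intro h
      apply key m k m.2 k.2 h
      have h1 := hcd l[m]
      have h2 := hcd l[k]
      rw [hb1] at h1
      rw [hb2] at h2
      have h3 := dist_triangle_right l[m] l[k] b
      simp only [Fin.getElem_fin] at *
      linarith
    simp only [Finset.mem_insert, Finset.mem_singleton]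
    omega
  calc F.card = (F.image (fun i : Fin l.length => (i : ℕ))).card :=
        (Finset.card_image_of_injective _ Fin.val_injective).symm
    _ ≤ _ := Finset.card_le_card hsub
    _ ≤ 2 := Finset.card_le_two
end

section
/- Let E be a chained entourage in a compact metric space X, and suppose E_ε ⊆ F ⊆ E for some entourage F and some ε > 0. Then every E-chain α has an F-refinement α′ with ν(α′) ≤ 2·ν(α)·C(X,ε/2). -/
open Filter Metric Set
open scoped ENNReal NNReal Topology

variable {X : Type*} [MetricSpace X]

theorem rsb_last (P : X → Prop) : ∀ l : List X, (∃ z ∈ l, P z) →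
    ∃ a z b, l = a ++ z :: b ∧ P z ∧ ∀ w ∈ b, ¬ P w := by
  intro l
  induction l with
  | nil => rintro ⟨z, hz, _⟩; simp at hz
  | cons u t ih =>
    rintro ⟨z, hz, hP⟩
    by_cases h : ∃ z ∈ t, P z
    · obtain ⟨a, z, b, rfl, h1, h2⟩ := ih h
      exact ⟨u :: a, z, b, rfl, h1, h2⟩
    · have hu : P u := by
        rcases List.mem_cons.1 hz with rfl | h'
        · exact hP
        · exact (h ⟨z, h', hP⟩).elim
      exact ⟨[], u, t, rfl, hu, fun w hw hPw => h ⟨w, hw, hPw⟩⟩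

theorem rsb_short (ε : ℝ) : ∀ n : ℕ, ∀ s : Finset X, s.card = n → ∀ (l : List X) (x y : X),
    l.head? = some x → l.getLast? = some y →
    l.IsChain (fun a b => dist a b < ε) →
    (∀ z ∈ l, ∃ c ∈ s, dist z c < ε / 2) →
    ∃ m : List X, (x :: (m ++ [y])).IsChain (fun a b => dist a b < ε) ∧
      (∀ z ∈ m, z ∈ l) ∧ m.length + 2 ≤ 2 * n := by
  classical
  intro n
  induction n with
  | zero =>
    intro s hs l x y hx _ _ hc
    obtain ⟨c, hc, _⟩ := hc x (List.mem_of_mem_head? hx)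
    rw [Finset.card_eq_zero.1 hs] at hc
    simp at hc
  | succ n ih =>
    intro s hs l x y hx hy hl hc
    have hxl : x ∈ l := List.mem_of_mem_head? hx
    obtain ⟨c, hcs, hxc⟩ := hc x hxl
    obtain ⟨a, z, b, rfl, hz, hb⟩ := rsb_last (fun w => dist w c < ε / 2) l ⟨x, hxl, hxc⟩
    have hxz : dist x z < ε := by
      have := dist_triangle_right x z c
      linarith
    cases b with
    | nil =>
      have : z = y := by simpa using hy
      subst this
      exact ⟨[], by simpa using hxz, by simp, by simp⟩
    | cons w b =>
      have hl' := (List.isChain_append.1 hl).2.1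
      rw [List.isChain_cons_cons] at hl'
      obtain ⟨m, hm1, hm2, hm3⟩ := ih (s.erase c) (by rw [Finset.card_erase_of_mem hcs]; omega)
        (w :: b) w y rfl (by simpa using hy) hl'.2 (by
          intro u hu
          obtain ⟨d, hd, hud⟩ := hc u (by simp at hu ⊢; tauto)
          refine ⟨d, Finset.mem_erase.2 ⟨?_, hd⟩, hud⟩
          rintro rfl
          exact hb u hu hud)
      refine ⟨z :: w :: m, ?_, ?_, ?_⟩
      · simp only [List.cons_append, List.isChain_cons_cons]
        exact ⟨hxz, hl'.1, hm1⟩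
      · intro u hu
        simp only [List.mem_cons] at hu
        rcases hu with rfl | rfl | hu
        · simp
        · simp
        · have := hm2 u hu
          simp only [List.mem_append, List.mem_cons] at this ⊢
          tauto
      · simp; omega

theorem rsb_cover [CompactSpace X] (ε : ℝ) (hε : 0 < ε) :
    ∃ s : Finset X, s.card = coveringNumber X ε ∧ (⋃ x ∈ s, Metric.ball x ε) = Set.univ := by
  have : {n : ℕ | ∃ s : Finset X, s.card = n ∧
      (⋃ x ∈ s, Metric.ball x ε) = Set.univ}.Nonempty := by
    obtain ⟨t, ht⟩ := isCompact_univ.elim_finite_subcover (fun x : X => Metric.ball x ε)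
      (fun _ => Metric.isOpen_ball) (fun x _ => Set.mem_iUnion.2 ⟨x, Metric.mem_ball_self hε⟩)
    exact ⟨t.card, t, rfl, Set.univ_subset_iff.1 ht⟩
  exact Nat.sInf_mem this

theorem rsb_main [CompactSpace X] (E F : Set (X × X))
    (hE : IsChained E) (ε : ℝ) (hε : 0 < ε)
    (h1 : MetricEnt X ε ⊆ F) : ∀ (t : List X) (x : X),
    (x :: t).IsChain (fun a b => (a, b) ∈ E) →
    ∃ α' : List X, IsRefinement E F (x :: t) α' ∧
      α'.length ≤ 1 + 2 * t.length * coveringNumber X (ε / 2) := by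
  obtain ⟨s, hs, hcov⟩ := rsb_cover (X := X) (ε / 2) (by linarith)
  intro t
  induction t with
  | nil => intro x _; exact ⟨[x], .single x, by simp⟩
  | cons y t ih =>
    intro x hx
    rw [List.isChain_cons_cons] at hx
    obtain ⟨r, hr, hrl⟩ := ih y hx.2
    obtain ⟨l, hl, hlx, hly, hlin⟩ := hE.2.2.2 (x, y) hx.1 ε hε
    obtain ⟨m, hm1, hm2, hm3⟩ := rsb_short ε _ s hs l x y hlx hly hl.2 (by
      intro z _
      have : z ∈ ⋃ x ∈ s, Metric.ball x (ε / 2) := hcov ▸ Set.mem_univ z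
      simpa using this)
    refine ⟨x :: (m ++ r), .cons x y m t r ⟨by simp, ?_⟩ ?_ hr, ?_⟩
    · exact hm1.imp (fun a b h => h1 h)
    · intro z hz
      apply hlin
      simp only [List.mem_cons, List.mem_append, List.not_mem_nil, or_false] at hz
      rcases hz with rfl | hz | rfl
      · exact List.mem_of_mem_head? hlx
      · exact hm2 z hz
      · exact List.mem_of_getLast? hly
    · simp only [List.length_cons, List.length_append]
      nlinarith

/-- if `E` is a chained entourage in a compact metric space and
`E_ε ⊆ F ⊆ E`, then every `E`-chain `α` has an `F`-refinement `α'` with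
`ν(α') ≤ 2·ν(α)·C(X,ε/2)`. -/
theorem refinement_size_bound [CompactSpace X] (E F : Set (X × X))
    (hE : IsChained E) (hF : IsEntourage F) (ε : ℝ) (hε : 0 < ε)
    (h1 : MetricEnt X ε ⊆ F) (h2 : F ⊆ E) (α : List X) (hα : IsEChain E α) :
    ∃ α' : List X, IsRefinement E F α α' ∧
      α'.length - 1 ≤ 2 * (α.length - 1) * coveringNumber X (ε / 2) := by
  obtain ⟨hne, hc⟩ := hα
  cases α with
  | nil => exact absurd rfl hne
  | cons x t =>
    obtain ⟨r, hr, hrl⟩ := rsb_main E F hE ε hε h1 t x hc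
    refine ⟨r, hr, ?_⟩
    simp only [List.length_cons, Nat.add_sub_cancel]
    omega
end

section
/- Let X be a metric space, c : [0,1] → X a continuous curve, and E an entourage in X. Then c has an E-subdivision, and any two E-subdivisions of c are E-homotopic. Moreover, for curves c_1 and c_2 with the same endpoints, some E-subdivision of c_1 is E-homotopic to some E-subdivision of c_2 if and only if every E-subdivision of c_1 is E-homotopic to every E-subdivision of c_2. -/
open Filter Metric Set
open scoped ENNReal NNReal Topology

variable {X : Type*} [MetricSpace X]

theorem EHom_cons {E : Set (X × X)} (z : X) {l l' : List X} (h : EHomotopic E l l') :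
    EHomotopic E (z :: l) (z :: l') := by
  refine Relation.ReflTransGen.lift (fun l => z :: l) ?_ _ _ h
  intro a b hab
  cases hab with
  | insert pre a x b post h1 h2 => exact EStep.insert (z :: pre) a x b post h1 h2
  | remove pre a x b post h => exact EStep.remove (z :: pre) a x b post h

def FineRel (E : Set (X × X)) (c : ℝ → X) (a b : ℝ) : Prop :=
  a ≤ b ∧ ∀ s t, a ≤ s → s ≤ b → a ≤ t → t ≤ b → (c s, c t) ∈ E

def OneRel (E : Set (X × X)) (c : ℝ → X) (a b : ℝ) : Prop :=
  a ≤ b ∧ ∀ s, a ≤ s → s ≤ b → (c s, c b) ∈ E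

theorem le_last_of_chain {r : ℝ → ℝ → Prop} (hr : ∀ a b, r a b → a ≤ b) (z : ℝ) :
    ∀ (l : List ℝ) (a : ℝ), (a :: l).IsChain r → (a :: l).getLast? = some z → a ≤ z := by
  intro l
  induction l with
  | nil => intro a _ h; simp at h; exact h.le
  | cons b l ih =>
    intro a h h'
    rw [List.isChain_cons_cons] at h
    rw [List.getLast?_cons_cons] at h'
    exact (hr _ _ h.1).trans (ih b h.2 h')

theorem key {E : Set (X × X)} (c : ℝ → X) (z : ℝ) : ∀ (n : ℕ) (ts rs : List ℝ) (x b y : ℝ),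
    ts.length + rs.length ≤ n →
    (x :: b :: ts).IsChain (OneRel E c) → (b :: ts).getLast? = some z →
    (x :: y :: rs).IsChain (FineRel E c) → (y :: rs).getLast? = some z →
    EHomotopic E ((x :: b :: ts).map c) ((x :: y :: rs).map c) ∧
    EHomotopic E ((x :: y :: rs).map c) ((x :: b :: ts).map c) := by
  intro n
  induction n with
  | zero =>
    intro ts rs x b y hn h1 h2 h3 h4
    have ht : ts = [] := List.length_eq_zero_iff.1 (by omega)
    have hr : rs = [] := List.length_eq_zero_iff.1 (by omega)
    subst ht hr
    simp at h2 h4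
    subst h2 h4
    exact ⟨Relation.ReflTransGen.refl, Relation.ReflTransGen.refl⟩
  | succ n ih =>
    intro ts rs x b y hn h1 h2 h3 h4
    rw [List.isChain_cons_cons] at h1 h3
    have hbz := le_last_of_chain (fun _ _ h => h.1) z _ _ h1.2 h2
    have hyz := le_last_of_chain (fun _ _ h => h.1) z _ _ h3.2 h4
    obtain ⟨⟨hxb, hQ⟩, h1⟩ := h1
    obtain ⟨⟨hxy, hF⟩, h3⟩ := h3
    have caseB : ∀ b' ts', ts = b' :: ts' → b ≤ y → 
        EHomotopic E ((x :: b :: ts).map c) ((x :: y :: rs).map c) ∧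
        EHomotopic E ((x :: y :: rs).map c) ((x :: b :: ts).map c) := by
      rintro b' ts' rfl hby
      have := ih ts' rs b b' y (by simp at hn; omega) h1 (by simpa using h2)
        (List.isChain_cons_cons.2 ⟨⟨hby, fun s t p q r w => hF s t (hxb.trans p) q (hxb.trans r) w⟩, h3⟩) h4
      refine ⟨(EHom_cons (c x) this.1).tail ?_, Relation.ReflTransGen.head ?_ (EHom_cons (c x) this.2)⟩
      · exact EStep.remove [] _ _ _ _ (hF x y le_rfl hxy hxy le_rfl)
      · exact EStep.insert [] _ _ _ _ (hF x b le_rfl hxy hxb hby) (hF b y hxb hby hxy le_rfl)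
    have caseR : ∀ y' rs', rs = y' :: rs' → y ≤ b → 
        EHomotopic E ((x :: b :: ts).map c) ((x :: y :: rs).map c) ∧
        EHomotopic E ((x :: y :: rs).map c) ((x :: b :: ts).map c) := by
      rintro y' rs' rfl hyb
      have := ih ts rs' y b y' (by simp at hn; omega)
        (List.isChain_cons_cons.2 ⟨⟨hyb, fun s p q => hQ s (hxy.trans p) q⟩, h1⟩) h2 h3
        (by simpa using h4)
      refine ⟨Relation.ReflTransGen.head ?_ (EHom_cons (c x) this.1), (EHom_cons (c x) this.2).tail ?_⟩
      · exact EStep.insert [] _ _ _ _ (hF x y le_rfl hxy hxy le_rfl) (hQ y hxy hyb)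
      · exact EStep.remove [] _ _ _ _ (hQ x le_rfl hxb)
    rcases ts with _ | ⟨b', ts'⟩
    · have hb : b = z := by simpa using h2
      rcases rs with _ | ⟨y', rs'⟩
      · have hy : y = z := by simpa using h4
        subst hb hy
        exact ⟨Relation.ReflTransGen.refl, Relation.ReflTransGen.refl⟩
      · exact caseR _ _ rfl (hb ▸ hyz)
    · rcases le_total b y with h | h
      · exact caseB _ _ rfl h
      · rcases rs with _ | ⟨y', rs'⟩
        · have hy : y = z := by simpa using h4
          exact caseB _ _ rfl (hy ▸ hbz)
        · exact caseR _ _ rfl h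

theorem fine_exists {E : Set (X × X)} (hE : IsEntourage E)
    (c : ℝ → X) (hc : ContinuousOn c (Set.Icc 0 1)) :
    ∃ y rs, ((0:ℝ) :: y :: rs).IsChain (FineRel E c) ∧ (y :: rs).getLast? = some 1 := by
  obtain ⟨_, ε, hε, hsub⟩ := hE
  have huc := isCompact_Icc.uniformContinuousOn_of_continuous hc
  rw [Metric.uniformContinuousOn_iff] at huc
  obtain ⟨δ, hδ, H⟩ := huc ε hε
  obtain ⟨N, hN⟩ := exists_nat_one_div_lt hδ
  have hN0 : (0:ℝ) < N + 1 := by positivity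
  have step : ∀ a b : ℝ, 0 ≤ a → a ≤ b → b ≤ 1 → b - a ≤ 1 / (N + 1) → FineRel E c a b := by
    intro a b h0 hab h1 hd
    refine ⟨hab, fun s t p q r w => hsub ?_⟩
    refine H s ⟨by linarith, by linarith⟩ t ⟨by linarith, by linarith⟩ ?_
    rw [Real.dist_eq, abs_lt]
    constructor <;> linarith
  have main : ∀ k : ℕ, k ≤ N + 1 → ∃ rs, ((1 - k / (N + 1) : ℝ) :: rs).IsChain (FineRel E c) ∧
      ((1 - k / (N + 1) : ℝ) :: rs).getLast? = some 1 ∧ rs.length = k := by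
    intro k
    induction k with
    | zero => intro _; exact ⟨[], by simp⟩
    | succ k ih =>
      intro hk
      obtain ⟨rs, h1, h2, h3⟩ := ih (by omega)
      refine ⟨_ :: rs, List.isChain_cons_cons.2 ⟨?_, h1⟩, ?_, by simp [h3]⟩
      · have e : ((k + 1 : ℕ) : ℝ) / (N + 1) = k / (N + 1) + 1 / (N + 1) := by
          push_cast; ring
        have hk' : ((k + 1 : ℕ) : ℝ) / (N + 1) ≤ 1 := by
          rw [div_le_one hN0]; exact_mod_cast hk
        have p1 : (0:ℝ) ≤ k / (N + 1) := by positivity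
        have p2 : (0:ℝ) ≤ 1 / (N + 1) := by positivity
        apply step <;> linarith
      · rw [List.getLast?_cons_cons]; exact h2
  obtain ⟨rs, h1, h2, h3⟩ := main (N + 1) le_rfl
  rcases rs with _ | ⟨y, rs⟩
  · simp at h3
  have e : (1 - ((N + 1 : ℕ) : ℝ) / (N + 1)) = 0 := by
    push_cast; rw [div_self hN0.ne']; ring
  rw [e] at h1
  exact ⟨y, rs, h1, by simpa using h2⟩

theorem sub_hom {E : Set (X × X)} (hE : IsEntourage E) (c : ℝ → X) {y : ℝ} {rs : List ℝ}
    (h1 : ((0:ℝ) :: y :: rs).IsChain (FineRel E c)) (h2 : (y :: rs).getLast? = some 1)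
    {l : List X} (hl : IsSubdivision E c l) :
    EHomotopic E l (((0:ℝ) :: y :: rs).map c) ∧ EHomotopic E (((0:ℝ) :: y :: rs).map c) l := by
  obtain ⟨ts, a1, a2, rfl, -, a4⟩ := hl
  rcases ts with _ | ⟨x, _ | ⟨b, ts⟩⟩
  · simp at a1
  · simp at a1 a2; linarith
  · have hx : x = 0 := by simpa using a1
    subst hx
    refine key c 1 _ ts rs 0 b y le_rfl ?_ (by simpa using a2) h1 h2
    refine List.IsChain.imp ?_ a4
    intro a b h
    exact ⟨h.1, fun s p q => hE.1 _ (h.2 s p q).2⟩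

theorem fine_sub {E : Set (X × X)} (c : ℝ → X) {y : ℝ} {rs : List ℝ}
    (h1 : ((0:ℝ) :: y :: rs).IsChain (FineRel E c)) (h2 : (y :: rs).getLast? = some 1) :
    IsSubdivision E c (((0:ℝ) :: y :: rs).map c) := by
  refine ⟨_, rfl, by simpa using h2, rfl, ⟨by simp, ?_⟩, ?_⟩
  · refine (List.isChain_map c).2 (List.IsChain.imp ?_ h1)
    intro a b h
    exact h.2 a b le_rfl h.1 h.1 le_rfl
  · refine List.IsChain.imp ?_ h1
    intro a b h
    exact ⟨h.1, fun s p q => ⟨h.2 a s le_rfl h.1 p q, h.2 b s h.1 le_rfl p q⟩⟩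

theorem any_hom {E : Set (X × X)} (hE : IsEntourage E)
    (c : ℝ → X) (hc : ContinuousOn c (Set.Icc 0 1)) (l₁ l₂ : List X)
    (h₁ : IsSubdivision E c l₁) (h₂ : IsSubdivision E c l₂) : EHomotopic E l₁ l₂ := by
  obtain ⟨y, rs, h1, h2⟩ := fine_exists hE c hc
  exact (sub_hom hE c h1 h2 h₁).1.trans (sub_hom hE c h1 h2 h₂).2

/-- every curve has an `E`-subdivision, any two `E`-subdivisions of a curve
are `E`-homotopic, and for two curves with the same endpoints, some pair of
`E`-subdivisions is `E`-homotopic iff every pair is. -/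
theorem subdivision_exists_and_homotopic (E : Set (X × X)) (hE : IsEntourage E)
    (c : ℝ → X) (hc : ContinuousOn c (Set.Icc 0 1)) :
    (∃ l : List X, IsSubdivision E c l) ∧
    (∀ l₁ l₂ : List X, IsSubdivision E c l₁ → IsSubdivision E c l₂ →
      EHomotopic E l₁ l₂) ∧
    (∀ c₁ c₂ : ℝ → X, ContinuousOn c₁ (Set.Icc 0 1) → ContinuousOn c₂ (Set.Icc 0 1) →
      c₁ 0 = c₂ 0 → c₁ 1 = c₂ 1 →
      ((∃ l₁ l₂ : List X, IsSubdivision E c₁ l₁ ∧ IsSubdivision E c₂ l₂ ∧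
          EHomotopic E l₁ l₂) ↔
        (∀ l₁ l₂ : List X, IsSubdivision E c₁ l₁ → IsSubdivision E c₂ l₂ →
          EHomotopic E l₁ l₂))) := by
  obtain ⟨y, rs, h1, h2⟩ := fine_exists hE c hc
  refine ⟨⟨_, fine_sub c h1 h2⟩, any_hom hE c hc, ?_⟩
  intro c₁ c₂ hc₁ hc₂ _ _
  constructor
  · rintro ⟨m₁, m₂, k₁, k₂, hm⟩ l₁ l₂ hl₁ hl₂
    exact ((any_hom hE c₁ hc₁ l₁ m₁ hl₁ k₁).trans hm).trans (any_hom hE c₂ hc₂ m₂ l₂ k₂ hl₂)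
  · intro h
    obtain ⟨y₁, rs₁, p1, p2⟩ := fine_exists hE c₁ hc₁
    obtain ⟨y₂, rs₂, q1, q2⟩ := fine_exists hE c₂ hc₂
    exact ⟨_, _, fine_sub c₁ p1 p2, fine_sub c₂ q1 q2, h _ _ (fine_sub c₁ p1 p2) (fine_sub c₂ q1 q2)⟩
end

section
/- Let E be an entourage in a metric space X and let α, β be E-chains with the same endpoints. If there exist a stringing α̂ of α and a stringing β̂ of β that are path homotopic with fixed endpoints, then α and β are E-homotopic. -/
open Filter Metric Set
open scoped ENNReal NNReal Topology

variable {X : Type*} [MetricSpace X]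

theorem EStep.consC {E : Set (X × X)} {l l' : List X} (x : X) (h : EStep E l l') :
    EStep E (x :: l) (x :: l') := by
  cases h with
  | insert pre a y b post h1 h2 => exact EStep.insert (x :: pre) a y b post h1 h2
  | remove pre a y b post h => exact EStep.remove (x :: pre) a y b post h

theorem EHomotopic.consC {E : Set (X × X)} {l l' : List X} (x : X) (h : EHomotopic E l l') :
    EHomotopic E (x :: l) (x :: l') :=
  Relation.ReflTransGen.lift (fun l => x :: l) (fun _ _ h => EStep.consC x h) _ _ h

theorem EHomotopic.appC {E : Set (X × X)} {l l' : List X} (p : List X) (h : EHomotopic E l l') :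
    EHomotopic E (p ++ l) (p ++ l') := by
  induction p with
  | nil => exact h
  | cons x p ih => exact EHomotopic.consC x ih

theorem EStep.symmC {E : Set (X × X)} {l l' : List X} (h : EStep E l l')
    (hl : l.IsChain (fun a b => (a, b) ∈ E)) :
    EStep E l' l ∧ l'.IsChain (fun a b => (a, b) ∈ E) := by
  cases h with
  | insert pre a x b post h1 h2 =>
    rw [List.isChain_append_cons_cons] at hl
    refine ⟨EStep.remove pre a x b post hl.2.1, ?_⟩
    rw [List.isChain_append_cons_cons]
    exact ⟨hl.1, h1, List.isChain_cons_cons.2 ⟨h2, hl.2.2⟩⟩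
  | remove pre a x b post h =>
    rw [List.isChain_append_cons_cons, List.isChain_cons_cons] at hl
    refine ⟨EStep.insert pre a x b post hl.2.1 hl.2.2.1, ?_⟩
    rw [List.isChain_append_cons_cons]
    exact ⟨hl.1, h, hl.2.2.2⟩

theorem EHomotopic.symmC {E : Set (X × X)} {l l' : List X} (h : EHomotopic E l l')
    (hl : l.IsChain (fun a b => (a, b) ∈ E)) :
    EHomotopic E l' l ∧ l'.IsChain (fun a b => (a, b) ∈ E) := by
  unfold EHomotopic at h ⊢
  induction h with
  | refl => exact ⟨.refl, hl⟩
  | tail _ hs ih =>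
    obtain ⟨h1, h2⟩ := hs.symmC ih.2
    exact ⟨Relation.ReflTransGen.head h1 ih.1, h2⟩

theorem rowAux {ι : Type*} {E : Set (X × X)} (x y : ι → X) (p : ι) (P : List ι) (q : ι)
    (hq : x q = y q) (hp : (x p, y p) ∈ E)
    (hP : (p :: (P ++ [q])).IsChain (fun a b => (x a, x b) ∈ E ∧ (x a, y b) ∈ E ∧
      (y a, y b) ∈ E ∧ (x b, y b) ∈ E)) :
    EHomotopic E (x p :: (P ++ [q]).map x) (x p :: y p :: (P ++ [q]).map y) := by
  induction P generalizing p with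
  | nil =>
    simp only [List.nil_append, List.isChain_cons_cons, List.map_cons, List.map_nil, hq] at hP ⊢
    exact Relation.ReflTransGen.single (EStep.insert [] _ _ _ [] hp hP.1.2.2.1)
  | cons r P ih =>
    simp only [List.cons_append, List.isChain_cons_cons, List.map_cons] at hP ih ⊢
    have h1 := EHomotopic.consC (x p) (ih r hP.1.2.2.2 hP.2)
    refine Relation.ReflTransGen.trans h1 ?_
    refine Relation.ReflTransGen.head (EStep.remove [] _ _ _ _ hP.1.2.1) ?_
    exact Relation.ReflTransGen.single (EStep.insert [] _ _ _ _ hp hP.1.2.2.1)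

theorem rowLemma {ι : Type*} {E : Set (X × X)} (x y : ι → X) (p : ι) (P : List ι) (q : ι)
    (hq : x q = y q) (hp : x p = y p) (hpp : (x p, y p) ∈ E)
    (hP : (p :: (P ++ [q])).IsChain (fun a b => (x a, x b) ∈ E ∧ (x a, y b) ∈ E ∧
      (y a, y b) ∈ E ∧ (x b, y b) ∈ E)) :
    EHomotopic E ((p :: (P ++ [q])).map x) ((p :: (P ++ [q])).map y) := by
  have h := rowAux x y p P q hq hpp hP
  simp only [List.map_cons]
  refine Relation.ReflTransGen.trans h ?_
  rw [hp]
  cases P with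
  | nil =>
    simp only [List.nil_append, List.isChain_cons_cons, List.map_cons, List.map_nil] at hP ⊢
    exact Relation.ReflTransGen.single (EStep.remove [] _ _ _ [] hP.1.2.2.1)
  | cons r P =>
    simp only [List.cons_append, List.isChain_cons_cons, List.map_cons] at hP ⊢
    exact Relation.ReflTransGen.single (EStep.remove [] _ _ _ _ hP.1.2.2.1)

theorem refineSeg {E : Set (X × X)} (x b : X) (mid post : List X)
    (hc : (x :: mid).IsChain (fun a b => (a, b) ∈ E)) (hb : ∀ z ∈ mid, (z, b) ∈ E) :
    EHomotopic E (x :: b :: post) (x :: (mid ++ b :: post)) := by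
  induction mid generalizing x with
  | nil => exact .refl
  | cons m mid ih =>
    rw [List.isChain_cons_cons] at hc
    refine Relation.ReflTransGen.head (EStep.insert [] x m b post hc.1 (hb m (by simp))) ?_
    exact EHomotopic.consC x (ih m hc.2 (fun z hz => hb z (by simp [hz])))

theorem exists_fine (δ : ℝ) (hδ : 0 < δ) (n : ℕ) (a b : ℝ) (hab : a ≤ b)
    (hn : b - a < n * (δ / 2)) :
    ∃ mid : List ℝ, (a :: (mid ++ [b])).IsChain (fun s t => |s - t| < δ) ∧
      ∀ z ∈ mid, a ≤ z ∧ z ≤ b := by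
  induction n generalizing a with
  | zero => norm_num at hn; linarith
  | succ n ih =>
    by_cases h : b - a < δ
    · refine ⟨[], ?_, by simp⟩
      simp only [List.nil_append, List.isChain_cons_cons, List.isChain_singleton, and_true]
      rw [abs_lt]; constructor <;> linarith
    · push Not at h
      push_cast at hn
      obtain ⟨mid, h1, h2⟩ := ih (a + δ / 2) (by linarith) (by linarith)
      refine ⟨(a + δ / 2) :: mid, ?_, ?_⟩
      · simp only [List.cons_append]
        rw [List.isChain_cons_cons]
        refine ⟨?_, h1⟩
        rw [abs_lt]; constructor <;> linarith
      · intro z hz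
        rcases List.mem_cons.1 hz with rfl | hz
        · constructor <;> linarith
        · have := h2 z hz
          exact ⟨by linarith, this.2⟩

theorem refineAll {E : Set (X × X)} (δ : ℝ) (hδ : 0 < δ) (f : ℝ → X)
    (hfE : ∀ s ∈ Set.Icc (0:ℝ) 1, ∀ t ∈ Set.Icc (0:ℝ) 1, |s - t| < δ → (f s, f t) ∈ E)
    (hsymm : ∀ p : X × X, p ∈ E → (p.2, p.1) ∈ E)
    (a : ℝ) (ts : List ℝ) (ha : 0 ≤ a) (hl : (a :: ts).getLast? = some 1)
    (hc : (a :: ts).IsChain (fun a b => a ≤ b ∧ ∀ s, a ≤ s → s ≤ b →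
      f s ∈ EBall E (f a) ∩ EBall E (f b))) :
    ∃ us : List ℝ, (a :: us).IsChain (fun s t => |s - t| < δ) ∧
      (a :: us).getLast? = some 1 ∧ (∀ z ∈ a :: us, a ≤ z ∧ z ≤ 1) ∧
      EHomotopic E ((a :: ts).map f) ((a :: us).map f) := by
  induction ts generalizing a with
  | nil =>
    refine ⟨[], by simp, hl, ?_, .refl⟩
    simp at hl
    simp [hl]
  | cons b ts ih =>
    rw [List.isChain_cons_cons] at hc
    obtain ⟨⟨hab, hball⟩, hc⟩ := hc
    obtain ⟨us, h1, h2, h3, h4⟩ := ih b (by linarith) (by simpa using hl) hc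
    obtain ⟨n, hn⟩ := exists_nat_gt ((b - a) / (δ / 2))
    rw [div_lt_iff₀ (by linarith)] at hn
    obtain ⟨mid, h5, h6⟩ := exists_fine δ hδ n a b hab hn
    have hb1 : b ≤ 1 := (h3 b (by simp)).2
    refine ⟨mid ++ b :: us, ?_, ?_, ?_, ?_⟩
    · have : a :: (mid ++ b :: us) = (a :: mid) ++ b :: us := by simp
      rw [this, List.isChain_split]
      exact ⟨by simpa using h5, h1⟩
    · rw [← List.cons_append, List.getLast?_append, h2]; simp
    · intro z hz
      simp only [List.mem_cons, List.mem_append] at hz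
      rcases hz with rfl | hz | hz
      · exact ⟨le_rfl, by linarith⟩
      · have := h6 z hz
        exact ⟨this.1, by linarith⟩
      · have := h3 z (by simpa using hz)
        exact ⟨by linarith, this.2⟩
    · refine Relation.ReflTransGen.trans (EHomotopic.consC (f a) h4) ?_
      simp only [List.map_cons, List.map_append]
      apply refineSeg
      · rw [← List.map_cons, List.isChain_map]
        have h7 : (a :: mid).IsChain (fun s t => |s - t| < δ) := by
          rw [← List.cons_append] at h5
          exact h5.left_of_append
        refine h7.imp_of_mem_imp ?_
        have hI : ∀ z ∈ a :: mid, z ∈ Set.Icc (0:ℝ) 1 := by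
          intro z hz
          rcases List.mem_cons.1 hz with rfl | hz
          · exact ⟨ha, by linarith⟩
          · have := h6 z hz
            exact ⟨by linarith, by linarith⟩
        intro s t hs ht hst
        exact hfE s (hI s hs) t (hI t ht) hst
      · intro z hz
        obtain ⟨s, hs, rfl⟩ := List.mem_map.1 hz
        have := h6 s hs
        exact hsymm _ (hball s this.1 this.2).2

theorem constTail {E : Set (X × X)} (x z : X) (n : ℕ) (h : (x, z) ∈ E) :
    EHomotopic E (x :: z :: List.replicate n z) [x, z] := by
  induction n with
  | zero => exact .refl
  | succ n ih =>
    exact Relation.ReflTransGen.head (EStep.remove [] x z z (List.replicate n z) h) ih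

theorem constHead {E : Set (X × X)} (z w : X) (l : List X) (n : ℕ) (h : (z, w) ∈ E) :
    EHomotopic E (List.replicate n z ++ z :: w :: l) (z :: w :: l) := by
  induction n with
  | zero => exact .refl
  | succ n ih =>
    exact Relation.ReflTransGen.tail (EHomotopic.consC z ih) (EStep.remove [] z z w l h)

/-- Data of a fine list of parameters from `0` to `1`. -/
theorem fineMain {E : Set (X × X)} (hE : IsEntourage E) (H : ℝ × ℝ → X) (x0 x1 : X)
    (δ : ℝ) (hδ : 0 < δ)
    (hH : ∀ s ∈ Set.Icc (0:ℝ) 1, ∀ t ∈ Set.Icc (0:ℝ) 1, ∀ s' ∈ Set.Icc (0:ℝ) 1,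
      ∀ t' ∈ Set.Icc (0:ℝ) 1, |s - s'| < δ → |t - t'| < δ → (H (s, t), H (s', t')) ∈ E)
    (h0 : ∀ s ∈ Set.Icc (0:ℝ) 1, H (s, 0) = x0) (h1 : ∀ s ∈ Set.Icc (0:ℝ) 1, H (s, 1) = x1)
    (us vs : List ℝ)
    (hu : (0 :: (us ++ [1])).IsChain (fun s t => |s - t| < δ / 2))
    (hv : (0 :: (vs ++ [1])).IsChain (fun s t => |s - t| < δ / 2))
    (huI : ∀ z ∈ us, z ∈ Set.Icc (0:ℝ) 1) (hvI : ∀ z ∈ vs, z ∈ Set.Icc (0:ℝ) 1) :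
    EHomotopic E ((0 :: (us ++ [1])).map (fun t => H (0, t)))
      ((0 :: (vs ++ [1])).map (fun t => H (1, t))) := by
  have I0 : (0:ℝ) ∈ Set.Icc (0:ℝ) 1 := by simp
  have I1 : (1:ℝ) ∈ Set.Icc (0:ℝ) 1 := by simp
  have huI' : ∀ z ∈ 0 :: (us ++ [1]), z ∈ Set.Icc (0:ℝ) 1 := by
    intro z hz
    simp only [List.mem_cons, List.mem_append, List.not_mem_nil, or_false] at hz
    rcases hz with rfl | hz | rfl
    exacts [I0, huI z hz, I1]
  have hvI' : ∀ z ∈ 0 :: (vs ++ [1]), z ∈ Set.Icc (0:ℝ) 1 := by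
    intro z hz
    simp only [List.mem_cons, List.mem_append, List.not_mem_nil, or_false] at hz
    rcases hz with rfl | hz | rfl
    exacts [I0, hvI z hz, I1]
  set P : List (ℝ × ℝ) := us.map (fun t => (t, (0:ℝ))) ++
    (1, 0) :: (1, 0) :: vs.map (fun u => ((1:ℝ), u)) with hPdef
  have hPeq : ((0:ℝ), (0:ℝ)) :: (P ++ [(1, 1)]) =
      (0 :: (us ++ [1])).map (fun t => (t, (0:ℝ))) ++
      (0 :: (vs ++ [1])).map (fun u => ((1:ℝ), u)) := by
    simp [hPdef]
  have hPI : ∀ p ∈ ((0:ℝ), (0:ℝ)) :: (P ++ [(1, 1)]),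
      p.1 ∈ Set.Icc (0:ℝ) 1 ∧ p.2 ∈ Set.Icc (0:ℝ) 1 := by
    intro p hp
    rw [hPeq, List.mem_append, List.mem_map, List.mem_map] at hp
    rcases hp with ⟨z, hz, rfl⟩ | ⟨z, hz, rfl⟩
    · exact ⟨huI' z hz, I0⟩
    · exact ⟨I1, hvI' z hz⟩
  have hPC : (((0:ℝ), (0:ℝ)) :: (P ++ [(1, 1)])).IsChain
      (fun p q => |p.1 - q.1| < δ / 2 ∧ |p.2 - q.2| < δ / 2) := by
    rw [hPeq, List.isChain_append]
    refine ⟨?_, ?_, ?_⟩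
    · rw [List.isChain_map]
      exact hu.imp (fun s t h => ⟨h, by simpa using hδ⟩)
    · rw [List.isChain_map]
      exact hv.imp (fun s t h => ⟨by simpa using hδ, h⟩)
    · intro x hx y hy
      rw [← List.cons_append, List.map_append, List.map_singleton, List.getLast?_concat] at hx
      simp at hx hy
      subst hx hy
      simpa using hδ
  obtain ⟨N, hN⟩ := exists_nat_gt (4 / δ)
  have hN0 : (0:ℝ) < N := lt_trans (by positivity) hN
  have hNδ : 1 / (N:ℝ) < δ / 4 := by
    rw [div_lt_iff₀ hδ] at hN
    rw [div_lt_iff₀ hN0]; linarith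
  let R : ℝ → ℝ × ℝ → X := fun s p => H (s, (1 - s) * p.1 + s * p.2)
  have key : ∀ s ∈ Set.Icc (0:ℝ) 1, ∀ s' ∈ Set.Icc (0:ℝ) 1, |s - s'| < δ / 4 →
      ∀ p q : ℝ × ℝ, p.1 ∈ Set.Icc (0:ℝ) 1 → p.2 ∈ Set.Icc (0:ℝ) 1 →
      q.1 ∈ Set.Icc (0:ℝ) 1 → q.2 ∈ Set.Icc (0:ℝ) 1 →
      |p.1 - q.1| < δ / 2 → |p.2 - q.2| < δ / 2 → (R s p, R s' q) ∈ E := by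
    rintro s ⟨hs0, hs1⟩ s' ⟨hs0', hs1'⟩ hss ⟨p1, p2⟩ ⟨q1, q2⟩ ⟨a1, a2⟩ ⟨a3, a4⟩ ⟨a5, a6⟩ ⟨a7, a8⟩ b1 b2
    simp only at a1 a2 a3 a4 a5 a6 a7 a8 b1 b2
    apply hH s ⟨hs0, hs1⟩ _ _ s' ⟨hs0', hs1'⟩ _ _ (by linarith)
    · have e : ((1 - s) * p1 + s * p2) - ((1 - s') * q1 + s' * q2) =
        (1 - s) * (p1 - q1) + s * (p2 - q2) + (s' - s) * (q1 - q2) := by ring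
      simp only
      rw [e]
      have c1 : |(1 - s) * (p1 - q1)| ≤ (1 - s) * (δ / 2) := by
        rw [abs_mul, abs_of_nonneg (by linarith : 0 ≤ 1 - s)]
        exact mul_le_mul_of_nonneg_left b1.le (by linarith)
      have c2 : |s * (p2 - q2)| ≤ s * (δ / 2) := by
        rw [abs_mul, abs_of_nonneg hs0]
        exact mul_le_mul_of_nonneg_left b2.le hs0
      have c3 : |(s' - s) * (q1 - q2)| ≤ |s - s'| * 1 := by
        rw [abs_mul, abs_sub_comm s' s]
        apply mul_le_mul_of_nonneg_left _ (abs_nonneg _)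
        rw [abs_le]; constructor <;> linarith
      have := abs_add_three ((1 - s) * (p1 - q1)) (s * (p2 - q2)) ((s' - s) * (q1 - q2))
      nlinarith
    · constructor
      · have := mul_nonneg (by linarith : 0 ≤ 1 - s) a1
        have := mul_nonneg hs0 a3
        simp only; linarith
      · have := mul_le_mul_of_nonneg_left a2 (by linarith : 0 ≤ 1 - s)
        have := mul_le_mul_of_nonneg_left a4 hs0
        simp only; linarith
    · constructor
      · have := mul_nonneg (by linarith : 0 ≤ 1 - s') a5
        have := mul_nonneg hs0' a7
        simp only; linarith
      · have := mul_le_mul_of_nonneg_left a6 (by linarith : 0 ≤ 1 - s')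
        have := mul_le_mul_of_nonneg_left a8 hs0'
        simp only; linarith
  have R0 : ∀ s ∈ Set.Icc (0:ℝ) 1, R s (0, 0) = x0 := by
    intro s hs; simp [R, h0 s hs]
  have R1 : ∀ s ∈ Set.Icc (0:ℝ) 1, R s (1, 1) = x1 := by
    intro s hs; simp [R, h1 s hs]
  have hd2 : |(0:ℝ)| < δ / 2 := by simpa using hδ
  have hd4 : |(0:ℝ)| < δ / 4 := by simpa using hδ
  have step : ∀ s ∈ Set.Icc (0:ℝ) 1, ∀ s' ∈ Set.Icc (0:ℝ) 1, |s - s'| < δ / 4 →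
      EHomotopic E ((((0:ℝ), (0:ℝ)) :: (P ++ [(1, 1)])).map (R s))
        ((((0:ℝ), (0:ℝ)) :: (P ++ [(1, 1)])).map (R s')) := by
    intro s hs s' hs' hss
    apply rowLemma
    · rw [R1 s hs, R1 s' hs']
    · rw [R0 s hs, R0 s' hs']
    · exact key s hs s' hs' hss (0, 0) (0, 0) I0 I0 I0 I0 (by simpa using hδ) (by simpa using hδ)
    · refine hPC.imp_of_mem_imp ?_
      intro p q hp hq ⟨e1, e2⟩
      obtain ⟨p1, p2⟩ := hPI p hp
      obtain ⟨q1, q2⟩ := hPI q hq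
      exact ⟨key s hs s hs (by simpa using hδ) p q p1 p2 q1 q2 e1 e2,
        key s hs s' hs' hss p q p1 p2 q1 q2 e1 e2,
        key s' hs' s' hs' (by simpa using hδ) p q p1 p2 q1 q2 e1 e2,
        key s hs s' hs' hss q q q1 q2 q1 q2 (by simpa using hδ) (by simpa using hδ)⟩
  have steps : ∀ k : ℕ, k ≤ N →
      EHomotopic E ((((0:ℝ), (0:ℝ)) :: (P ++ [(1, 1)])).map (R 0))
        ((((0:ℝ), (0:ℝ)) :: (P ++ [(1, 1)])).map (R (k / N))) := by
    intro k
    induction k with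
    | zero => intro _; simp only [Nat.cast_zero, zero_div]; exact .refl
    | succ k ih =>
      intro hk
      have hk' : ((k + 1 : ℕ) : ℝ) ≤ N := by exact_mod_cast hk
      push_cast at hk'
      refine Relation.ReflTransGen.trans (ih (by omega)) (step _ ?_ _ ?_ ?_)
      · exact ⟨by positivity, by rw [div_le_one hN0]; linarith⟩
      · exact ⟨by positivity, by rw [div_le_one hN0]; push_cast; linarith⟩
      · have : (k:ℝ) / N - ((k + 1 : ℕ) : ℝ) / N = - (1 / N) := by
          push_cast; field_simp; ring
        rw [this, abs_neg, abs_of_nonneg (by positivity)]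
        exact hNδ
  have hfin := steps N le_rfl
  rw [div_self hN0.ne'] at hfin
  have r0 : (((0:ℝ), (0:ℝ)) :: (P ++ [(1, 1)])).map (R 0) =
      (0 :: (us ++ [1])).map (fun t => H (0, t)) ++ List.replicate (vs.length + 2) x1 := by
    rw [hPeq, List.map_append, List.map_map, List.map_map]
    congr 1
    · apply List.map_congr_left; intro t _; simp [R]
    · rw [List.eq_replicate_iff]
      refine ⟨by simp, ?_⟩
      intro b hb
      obtain ⟨t, _, rfl⟩ := List.mem_map.1 hb
      simp [R, h1 0 I0]
  have r1 : (((0:ℝ), (0:ℝ)) :: (P ++ [(1, 1)])).map (R 1) =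
      List.replicate (us.length + 2) x0 ++ (0 :: (vs ++ [1])).map (fun t => H (1, t)) := by
    rw [hPeq, List.map_append, List.map_map, List.map_map]
    congr 1
    · rw [List.eq_replicate_iff]
      refine ⟨by simp, ?_⟩
      intro b hb
      obtain ⟨t, _, rfl⟩ := List.mem_map.1 hb
      simp [R, h0 1 I1]
    · apply List.map_congr_left; intro t _; simp [R]
  have chU : ((0 :: (us ++ [1])).map (fun t => H (0, t))).IsChain (fun a b => (a, b) ∈ E) := by
    rw [List.isChain_map]
    refine hu.imp_of_mem_imp ?_
    intro s t hs ht hst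
    exact hH 0 I0 s (huI' s hs) 0 I0 t (huI' t ht) (by simpa using hδ) (by linarith)
  have chV : ((0 :: (vs ++ [1])).map (fun t => H (1, t))).IsChain (fun a b => (a, b) ∈ E) := by
    rw [List.isChain_map]
    refine hv.imp_of_mem_imp ?_
    intro s t hs ht hst
    exact hH 1 I1 s (hvI' s hs) 1 I1 t (hvI' t ht) (by simpa using hδ) (by linarith)
  have hx1 : (x1, x1) ∈ E := by
    have := hH 0 I0 1 I1 0 I0 1 I1 (by simpa using hδ) (by simpa using hδ)
    rwa [h1 0 I0] at this
  have A : EHomotopic E ((0 :: (us ++ [1])).map (fun t => H (0, t)))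
      ((0 :: (us ++ [1])).map (fun t => H (0, t)) ++ List.replicate (vs.length + 2) x1) := by
    obtain ⟨pre, y, hy⟩ : ∃ pre y, (0 :: us).map (fun t => H (0, t)) = pre ++ [y] := by
      rcases List.eq_nil_or_concat ((0 :: us).map (fun t => H (0, t))) with h | ⟨pre, y, h⟩
      · simp at h
      · exact ⟨pre, y, by simpa using h⟩
    have e1 : (0 :: (us ++ [1])).map (fun t => H (0, t)) = pre ++ [y, x1] := by
      rw [← List.cons_append, List.map_append, hy]; simp [h1 0 I0]
    rw [e1] at chU ⊢
    have hyx : (y, x1) ∈ E := (List.isChain_append_cons_cons.1 chU).2.1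
    have e2 : pre ++ [y, x1] ++ List.replicate (vs.length + 2) x1 =
      pre ++ (y :: x1 :: List.replicate (vs.length + 2) x1) := by simp
    have ht := EHomotopic.appC pre (constTail y x1 (vs.length + 2) hyx)
    rw [e2]
    refine (ht.symmC ?_).1
    rw [List.isChain_append_cons_cons]
    refine ⟨(List.isChain_append_cons_cons.1 chU).1, hyx, ?_⟩
    exact List.isChain_replicate_of_rel (vs.length + 2 + 1) hx1
  have B : EHomotopic E (List.replicate (us.length + 2) x0 ++
      (0 :: (vs ++ [1])).map (fun t => H (1, t))) ((0 :: (vs ++ [1])).map (fun t => H (1, t))) := by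
    obtain ⟨w, l, hw⟩ : ∃ w l, (vs ++ [1]).map (fun t => H (1, t)) = w :: l := by
      rcases h : (vs ++ [1]).map (fun t => H (1, t)) with _ | ⟨w, l⟩
      · simp at h
      · exact ⟨w, l, h⟩
    rw [List.map_cons, hw, h0 1 I1] at chV ⊢
    exact constHead x0 w l _ (List.isChain_cons_cons.1 chV).1
  rw [r0, r1] at hfin
  exact (A.trans hfin).trans B

theorem splitEnds (us : List ℝ) (h : (0 :: us).getLast? = some (1:ℝ)) : ∃ ws, us = ws ++ [1] := by
  rcases List.eq_nil_or_concat us with rfl | ⟨ws, y, rfl⟩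
  · simp at h
  · refine ⟨ws, ?_⟩
    rw [List.concat_eq_append, ← List.cons_append, List.getLast?_concat] at h
    simpa using h

/-- if two `E`-chains with the same endpoints admit stringings that are
path homotopic with fixed endpoints, then the chains are `E`-homotopic. -/
theorem stringings_homotopic_imp_chains_homotopic (E : Set (X × X))
    (hE : IsEntourage E) (α β : List X) (hα : IsEChain E α) (hβ : IsEChain E β)
    (hhead : α.head? = β.head?) (hlast : α.getLast? = β.getLast?)
    (f g : ℝ → X) (hf : IsStringing E α f) (hg : IsStringing E β g)
    (hfg : PathHomotopicOn f g) :
    EHomotopic E α β := by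
  obtain ⟨hsymm, ε, hε, hεE⟩ := id hE
  obtain ⟨H, hHc, hH01, hHs⟩ := hfg
  obtain ⟨-, ts, hts0, hts1, rfl, -, htsc⟩ := hf
  obtain ⟨-, rs, hrs0, hrs1, rfl, -, hrsc⟩ := hg
  have I0 : (0:ℝ) ∈ Set.Icc (0:ℝ) 1 := by simp
  have I1 : (1:ℝ) ∈ Set.Icc (0:ℝ) 1 := by simp
  have huc := (isCompact_Icc.prod isCompact_Icc).uniformContinuousOn_of_continuous hHc
  obtain ⟨δ, hδ, hδH⟩ := Metric.uniformContinuousOn_iff.1 huc ε hε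
  have hH : ∀ s ∈ Set.Icc (0:ℝ) 1, ∀ t ∈ Set.Icc (0:ℝ) 1, ∀ s' ∈ Set.Icc (0:ℝ) 1,
      ∀ t' ∈ Set.Icc (0:ℝ) 1, |s - s'| < δ → |t - t'| < δ → (H (s, t), H (s', t')) ∈ E := by
    intro s hs t ht s' hs' t' ht' h1 h2
    apply hεE
    exact hδH (s, t) ⟨hs, ht⟩ (s', t') ⟨hs', ht'⟩ (by
      rw [Prod.dist_eq, Real.dist_eq, Real.dist_eq]; exact max_lt h1 h2)
  have hfE : ∀ s ∈ Set.Icc (0:ℝ) 1, ∀ t ∈ Set.Icc (0:ℝ) 1, |s - t| < δ / 2 → (f s, f t) ∈ E := by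
    intro s hs t ht hst
    rw [← (hH01 s hs).1, ← (hH01 t ht).1]
    exact hH 0 I0 s hs 0 I0 t ht (by simpa using hδ) (by linarith)
  have hgE : ∀ s ∈ Set.Icc (0:ℝ) 1, ∀ t ∈ Set.Icc (0:ℝ) 1, |s - t| < δ / 2 → (g s, g t) ∈ E := by
    intro s hs t ht hst
    rw [← (hH01 s hs).2, ← (hH01 t ht).2]
    exact hH 1 I1 s hs 1 I1 t ht (by simpa using hδ) (by linarith)
  obtain ⟨ts, rfl⟩ : ∃ ts', ts = 0 :: ts' := by
    cases ts with
    | nil => simp at hts0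
    | cons a l => simp at hts0; exact ⟨l, by rw [hts0]⟩
  obtain ⟨rs, rfl⟩ : ∃ rs', rs = 0 :: rs' := by
    cases rs with
    | nil => simp at hrs0
    | cons a l => simp at hrs0; exact ⟨l, by rw [hrs0]⟩
  obtain ⟨us, u1, u2, u3, u4⟩ := refineAll (δ / 2) (by linarith) f hfE hsymm 0 ts le_rfl hts1 htsc
  obtain ⟨vs, v1, v2, v3, v4⟩ := refineAll (δ / 2) (by linarith) g hgE hsymm 0 rs le_rfl hrs1 hrsc
  obtain ⟨us, rfl⟩ := splitEnds us u2
  obtain ⟨vs, rfl⟩ := splitEnds vs v2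
  have m := fineMain hE H (f 0) (f 1) δ hδ hH (fun s hs => (hHs s hs).1) (fun s hs => (hHs s hs).2)
    us vs u1 v1 (fun z hz => u3 z (by simp [hz])) (fun z hz => v3 z (by simp [hz]))
  have e1 : (0 :: (us ++ [1])).map (fun t => H (0, t)) = (0 :: (us ++ [1])).map f :=
    List.map_congr_left (fun t ht => (hH01 t (u3 t ht)).1)
  have e2 : (0 :: (vs ++ [1])).map (fun t => H (1, t)) = (0 :: (vs ++ [1])).map g :=
    List.map_congr_left (fun t ht => (hH01 t (v3 t ht)).2)
  rw [e1, e2] at m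
  exact (u4.trans m).trans (v4.symmC hβ.2).1
end

section
/- Let X be a compact metric space, E a chained entourage, and c_i : [0,1] → X a sequence of curves of uniformly bounded length converging uniformly to c : [0,1] → X. (1) If all the c_i have the same initial point and the same final point as c, then c_i is E-homotopic to c for all sufficiently large i. (2) If all the curves are closed, then c_i is freely E-homotopic to c for all sufficiently large i. -/
open Filter Metric Set
open scoped ENNReal NNReal Topology

variable {X : Type*} [MetricSpace X]

lemma exists_ts (δ : ℝ) (hδ : 0 < δ) : ∀ n : ℕ, ∀ a : ℝ, 0 ≤ a → a ≤ 1 → 1 - a ≤ n * δ →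
    ∃ b rest, (b :: rest : List ℝ).getLast? = some 1 ∧
      (a :: b :: rest).IsChain (fun s t => 0 ≤ s ∧ t ≤ 1 ∧ s ≤ t ∧ t ≤ s + δ) := by
  intro n
  induction n with
  | zero =>
    intro a h0 h1 h
    have : a = 1 := by simp at h; linarith
    subst this
    refine ⟨1, [], rfl, ?_⟩
    simp
    exact hδ.le
  | succ n ih =>
    intro a h0 h1 h
    push_cast at h
    have hb : a ≤ min (a + δ) 1 := le_min (by linarith) h1
    obtain ⟨b, rest, hl, hc⟩ := ih (min (a + δ) 1) (h0.trans hb) (min_le_right _ _) (by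
      rcases le_total (a + δ) 1 with h' | h'
      · rw [min_eq_left h']; nlinarith
      · rw [min_eq_right h']; simp; positivity)
    refine ⟨min (a + δ) 1, b :: rest, by simpa using hl, ?_⟩
    exact List.IsChain.cons_cons ⟨h0, min_le_right _ _, hb, min_le_left _ _⟩ hc

lemma EHomotopic.cons_ctx {E : Set (X × X)} {l m : List X} (x : X) (h : EHomotopic E l m) :
    EHomotopic E (x :: l) (x :: m) := by
  refine Relation.ReflTransGen.lift (r := EStep E) (p := EStep E) (fun l => x :: l) ?_ _ _ h
  intro l m hs
  cases hs with
  | insert pre a y b post h1 h2 => exact EStep.insert (x :: pre) a y b post h1 h2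
  | remove pre a y b post h => exact EStep.remove (x :: pre) a y b post h

lemma homotopic_aux {E : Set (X × X)} (f g : ℝ → X) (S : ℝ → ℝ → Prop)
    (hS : ∀ s t, S s t → (f t, f t) ∈ E ∧ (g t, f t) ∈ E ∧ (g s, f t) ∈ E ∧ (g s, g t) ∈ E)
    (e : ℝ) (tl : List X)
    (htl : (f e = g e ∧ tl = []) ∨ tl = [g e]) :
    ∀ (rest : List ℝ) (a b : ℝ) (x : X), (x, f b) ∈ E → (x, g b) ∈ E →
    (b :: rest).getLast? = some e → (a :: b :: rest).IsChain S →
    EHomotopic E (x :: ((b :: rest).map f ++ tl)) (x :: (b :: rest).map g) := by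
  intro rest
  induction rest with
  | nil =>
    intro a b x h1 h2 he hc
    simp at he
    subst he
    rcases htl with ⟨h, rfl⟩ | rfl
    · simp [h]; exact Relation.ReflTransGen.refl
    · exact Relation.ReflTransGen.single (EStep.remove [] x (f b) (g b) [] h2)
  | cons d r ih =>
    intro a b x h1 h2 he hc
    have hc' : (b :: d :: r).IsChain S := by
      cases hc; assumption
    have hab : S a b := by cases hc; assumption
    have hbd : S b d := by cases hc'; assumption
    have k1 := hS _ _ hab
    have k2 := hS _ _ hbd
    refine Relation.ReflTransGen.head (EStep.insert [] x (g b) (f b) _ h2 k1.2.1) ?_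
    refine Relation.ReflTransGen.head (EStep.remove [x] (g b) (f b) (f d) _ k2.2.2.1) ?_
    exact (ih b d (g b) k2.2.2.1 k2.2.2.2 (by simpa using he) hc').cons_ctx x

lemma isSubdivision_of {E : Set (X × X)} {ε : ℝ} (hε : MetricEnt X ε ⊆ E) (f : ℝ → X) (δ : ℝ)
    (hf : ∀ s t, 0 ≤ s → s ≤ 1 → 0 ≤ t → t ≤ 1 → |s - t| ≤ δ → dist (f s) (f t) < ε)
    (ts : List ℝ) (h0 : ts.head? = some 0) (h1 : ts.getLast? = some 1)
    (hc : ts.IsChain (fun s t => 0 ≤ s ∧ t ≤ 1 ∧ s ≤ t ∧ t ≤ s + δ)) :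
    IsSubdivision E f (ts.map f) := by
  refine ⟨ts, h0, h1, rfl, ⟨?_, ?_⟩, ?_⟩
  · rintro h
    simp at h
    simp [h] at h0
  · refine (List.isChain_map f).2 (hc.imp ?_)
    rintro s t ⟨a, b, c, d⟩
    exact hε (hf _ _ a (by linarith) (by linarith) b (abs_le.2 ⟨by linarith, by linarith⟩))
  · refine hc.imp ?_
    rintro s t ⟨a, b, c, d⟩
    refine ⟨c, fun u hu1 hu2 => ⟨?_, ?_⟩⟩
    · exact hε (hf _ _ a (by linarith) (by linarith) (by linarith)
        (abs_le.2 ⟨by linarith, by linarith⟩))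
    · exact hε (hf _ _ (by linarith) (by linarith) (by linarith) (by linarith)
        (abs_le.2 ⟨by linarith, by linarith⟩))

/-- in a compact metric space with chained entourage `E`, if curves `cᵢ` of
uniformly bounded length converge uniformly to `c`, then (1) with fixed endpoints, `cᵢ`
is `E`-homotopic to `c` for large `i`; (2) if all curves are closed, `cᵢ` is freely
`E`-homotopic to `c` for large `i`. -/
theorem uniform_convergence_ehomotopic [CompactSpace X] (E : Set (X × X))
    (hE : IsChained E) (c : ℕ → ℝ → X) (clim : ℝ → X)
    (hcont : ∀ i, ContinuousOn (c i) (Set.Icc 0 1))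
    (hclim : ContinuousOn clim (Set.Icc 0 1))
    (hlen : ∃ L : ℝ, ∀ i, eVariationOn (c i) (Set.Icc 0 1) ≤ ENNReal.ofReal L)
    (hconv : TendstoUniformlyOn c clim atTop (Set.Icc 0 1)) :
    ((∀ i, c i 0 = clim 0 ∧ c i 1 = clim 1) →
      ∀ᶠ i in atTop, CurveEHomotopic E (c i) clim) ∧
    (((∀ i, c i 0 = c i 1) ∧ clim 0 = clim 1) →
      ∀ᶠ i in atTop, CurveFreelyEHomotopic E (c i) clim) := by
  obtain ⟨⟨-, ε, hε, hεE⟩, -⟩ := hE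
  have huc := (isCompact_Icc.uniformContinuousOn_of_continuous hclim)
  rw [Metric.uniformContinuousOn_iff] at huc
  obtain ⟨δ', hδ', hu⟩ := huc (ε / 4) (by positivity)
  obtain ⟨δ, hδ, hδδ⟩ := exists_between hδ'
  have hg4 : ∀ s t, 0 ≤ s → s ≤ 1 → 0 ≤ t → t ≤ 1 → |s - t| ≤ δ →
      dist (clim s) (clim t) < ε / 4 := fun s t a b a' b' h =>
    hu s ⟨a, b⟩ t ⟨a', b'⟩ (by rw [Real.dist_eq]; linarith)
  obtain ⟨n, hn⟩ := exists_nat_ge (1 / δ)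
  obtain ⟨b, rest, hl, hc⟩ := exists_ts δ hδ n 0 le_rfl zero_le_one (by
    rw [div_le_iff₀ hδ] at hn; linarith)
  have hg : ∀ s t, 0 ≤ s → s ≤ 1 → 0 ≤ t → t ≤ 1 → |s - t| ≤ δ →
      dist (clim s) (clim t) < ε := fun s t a b a' b' h =>
    (hg4 s t a b a' b' h).trans (by linarith)
  have hsg := isSubdivision_of hεE clim δ hg (0 :: b :: rest) rfl (by simpa using hl) hc
  have hev := (Metric.tendstoUniformlyOn_iff.1 hconv) (ε / 4) (by positivity)
  have key : ∀ i, (∀ x ∈ Set.Icc (0:ℝ) 1, dist (clim x) (c i x) < ε / 4) →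
      (∀ s t, 0 ≤ s → s ≤ 1 → 0 ≤ t → t ≤ 1 → |s - t| ≤ δ → dist (c i s) (c i t) < ε) ∧
      (∀ s t, 0 ≤ s → s ≤ 1 → 0 ≤ t → t ≤ 1 → |s - t| ≤ δ → dist (clim s) (c i t) < ε) := by
    intro i hi
    refine ⟨fun s t a b a' b' h => ?_, fun s t a b a' b' h => ?_⟩
    · have h1 := hi s ⟨a, b⟩
      have h2 := hi t ⟨a', b'⟩
      have h3 := hg4 s t a b a' b' h
      rw [dist_comm] at h1
      have := dist_triangle4 (c i s) (clim s) (clim t) (c i t)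
      linarith
    · have h2 := hi t ⟨a', b'⟩
      have h3 := hg4 s t a b a' b' h
      have := dist_triangle (clim s) (clim t) (c i t)
      linarith
  have hS : ∀ i, (∀ x ∈ Set.Icc (0:ℝ) 1, dist (clim x) (c i x) < ε / 4) →
      ∀ s t : ℝ, (0 ≤ s ∧ t ≤ 1 ∧ s ≤ t ∧ t ≤ s + δ) →
      (c i t, c i t) ∈ E ∧ (clim t, c i t) ∈ E ∧ (clim s, c i t) ∈ E ∧ (clim s, clim t) ∈ E := by
    rintro i hi s t ⟨h1, h2, h3, h4⟩
    obtain ⟨k1, k2⟩ := key i hi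
    have ht : 0 ≤ t := h1.trans h3
    have hs : s ≤ 1 := h3.trans h2
    have e0 : |t - t| ≤ δ := by simpa using hδ.le
    have e1 : |s - t| ≤ δ := abs_le.2 ⟨by linarith, by linarith⟩
    exact ⟨hεE (k1 t t ht h2 ht h2 e0), hεE (k2 t t ht h2 ht h2 e0),
      hεE (k2 s t h1 hs ht h2 e1), hεE (hg s t h1 hs ht h2 e1)⟩
  have h0b : (0:ℝ) ≤ 0 ∧ b ≤ 1 ∧ 0 ≤ b ∧ b ≤ 0 + δ := by cases hc; assumption
  constructor
  · intro hend
    filter_upwards [hev] with i hi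
    have kb := hS i hi 0 b h0b
    refine ⟨_, _, isSubdivision_of hεE (c i) δ (key i hi).1 (0 :: b :: rest) rfl
      (by simpa using hl) hc, hsg, ?_⟩
    have := homotopic_aux (c i) clim _ (hS i hi) 1 [] (Or.inl ⟨(hend i).2, rfl⟩) rest 0 b (clim 0)
      kb.2.2.1 kb.2.2.2 hl hc
    simpa [(hend i).1] using this
  · rintro ⟨hcl, hcl'⟩
    filter_upwards [hev] with i hi
    have kb := hS i hi 0 b h0b
    refine ⟨_, _, isSubdivision_of hεE (c i) δ (key i hi).1 (0 :: b :: rest) rfl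
      (by simpa using hl) hc, hsg, ?_⟩
    have k0 : (clim 0, c i 0) ∈ E := hεE ((key i hi).2 0 0 le_rfl zero_le_one le_rfl zero_le_one
      (by simpa using hδ.le))
    refine ⟨[clim 0, c i 0], [clim 0], ⟨by simp, List.isChain_pair.2 k0⟩,
      ⟨by simp, List.isChain_singleton _⟩, rfl,
      by simp, by simp, ?_⟩
    have := homotopic_aux (c i) clim _ (hS i hi) 1 [clim 1] (Or.inr rfl) rest 0 b (clim 0)
      kb.2.2.1 kb.2.2.2 hl hc
    refine Relation.ReflTransGen.head (EStep.remove [] (clim 0) (c i 0) (c i b) _ kb.2.2.1) ?_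
    simpa [chainConc, hcl', EHomotopic] using this
end
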